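/- If 0 ≤ λ_p ≤ λ̂, then the linearized rate region R̂_0 is nonempty: scaling an optimal LP solution x̂ by the factor λ_p/λ̂ (placing the remaining probability mass on idle-slot zero-power controls q(e,s,0)) produces a feasible point. (Converse direction of Corollary 1.) -/

import Mathlib

open Finset

/-- Linearized rate region `R̂_0`. -/
def linRegion {S : Type*} [Fintype S] (I : S → ℕ)
    (P rs rp : (s : S) → Fin (I s + 1) → ℝ)
    (Phat : S → ℝ) (lam : ℝ) : Set (S → ℝ) :=
  {rbar | ∃ qB qE : (s : S) → Fin (I s + 1) → ℝ,
    (∀ s i, 0 ≤ qB s i) ∧ (∀ s i, 0 ≤ qE s i) ∧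
    (∑ s, ∑ i, rp s i * qB s i) = lam ∧
    (∀ s, (∑ i, P s i * qE s i) + (∑ i, P s i * qB s i) ≤ Phat s) ∧
    ((∑ s, ∑ i, qE s i) + (∑ s, ∑ i, qB s i)) = 1 ∧
    (∀ s, rbar s = ∑ i, rs s i * qE s i)}

/-- Optimal value `λ̂` of the stability-region linear program. -/
noncomputable def lamHat {S : Type*} [Fintype S] (I : S → ℕ)
    (P rp : (s : S) → Fin (I s + 1) → ℝ) (Phat : S → ℝ) : ℝ :=
  sSup {v | ∃ x : (s : S) → Fin (I s + 1) → ℝ,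
    (∀ s i, 0 ≤ x s i) ∧ (∀ s, (∑ i, P s i * x s i) ≤ Phat s) ∧
    (∑ s, ∑ i, x s i) ≤ 1 ∧ v = ∑ s, ∑ i, rp s i * x s i}

/-!
The feasible set of the linear program defining `λ̂` is compact and convex and contains `0`, so by
the intermediate value theorem every `λ_p ∈ [0, λ̂]` is the throughput of a feasible `x`. Using `x`
in the busy slots and spending the missing probability mass on a zero-power control in the idle
slots gives a point of `R̂_0`.
-/

open Set in
theorem Icc_sSup_image_subset_image {X α : Type*} [TopologicalSpace X]
    [ConditionallyCompleteLinearOrder α] [TopologicalSpace α] [OrderClosedTopology α]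
    {K : Set X} (hcompact : IsCompact K) (hconn : IsPreconnected K) {a : X} (ha : a ∈ K)
    {f : X → α} (hf : ContinuousOn f K) : Icc (f a) (sSup (f '' K)) ⊆ f '' K := by
  obtain ⟨b, hb, hmax⟩ := hcompact.exists_sSup_image_eq ⟨a, ha⟩ hf
  exact hmax ▸ hconn.intermediate_value ha hb hf

section Feasible

variable {S : Type*} [Fintype S] {ι : S → Type*} [∀ s, Fintype (ι s)]

/-- Feasible set of the stability-region linear program: the nonnegative weights `x s i` of total
mass at most `1` that respect every power budget. The set of controls of `s` is an arbitrary finite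
type `ι s`, in place of `Fin (I s + 1)`. -/
def feasibleControls (P : (s : S) → ι s → ℝ) (Phat : S → ℝ) : Set ((s : S) → ι s → ℝ) :=
  {x | (∀ s i, 0 ≤ x s i) ∧ (∀ s, ∑ i, P s i * x s i ≤ Phat s) ∧ ∑ s, ∑ i, x s i ≤ 1}

/-- Objective of the stability-region linear program: the service rate that the primary user gets
from the weights `x` under the success probabilities `r`. -/
def throughput (r x : (s : S) → ι s → ℝ) : ℝ :=
  ∑ s, ∑ i, r s i * x s i

theorem continuous_throughput (r : (s : S) → ι s → ℝ) : Continuous (throughput r) := by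
  unfold throughput
  fun_prop

theorem throughput_zero (r : (s : S) → ι s → ℝ) : throughput r 0 = 0 := by
  simp [throughput]

variable {P : (s : S) → ι s → ℝ} {Phat : S → ℝ}

theorem zero_mem_feasibleControls (hPhat : ∀ s, 0 ≤ Phat s) : 0 ∈ feasibleControls P Phat := by
  simp [feasibleControls, hPhat]

variable (P Phat)

theorem isClosed_feasibleControls : IsClosed (feasibleControls P Phat) := by
  simp only [feasibleControls, Set.ofPred_and, Set.ofPred_forall]
  refine .inter ?nonneg (.inter ?power ?mass)
  case nonneg =>
    exact isClosed_iInter fun s ↦ isClosed_iInter fun i ↦ isClosed_le (by fun_prop) (by fun_prop)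
  case power => exact isClosed_iInter fun s ↦ isClosed_le (by fun_prop) (by fun_prop)
  case mass => exact isClosed_le (by fun_prop) (by fun_prop)

theorem feasibleControls_subset_Icc : feasibleControls P Phat ⊆ Set.Icc 0 1 := by
  rintro x ⟨hnonneg, -, hmass⟩
  refine ⟨hnonneg, fun s i ↦ ?_⟩
  calc
    x s i ≤ ∑ j, x s j := single_le_sum (fun j _ ↦ hnonneg s j) (mem_univ i)
    _ ≤ ∑ t, ∑ j, x t j :=
      single_le_sum (f := fun t ↦ ∑ j, x t j) (fun t _ ↦ sum_nonneg fun j _ ↦ hnonneg t j)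
        (mem_univ s)
    _ ≤ 1 := hmass

theorem isCompact_feasibleControls : IsCompact (feasibleControls P Phat) :=
  isCompact_Icc.of_isClosed_subset (isClosed_feasibleControls P Phat)
    (feasibleControls_subset_Icc P Phat)

theorem convex_feasibleControls : Convex ℝ (feasibleControls P Phat) := by
  simp only [feasibleControls, Set.ofPred_and, Set.ofPred_forall]
  refine .inter ?nonneg (.inter ?power ?mass)
  case nonneg =>
    exact convex_iInter fun s ↦ convex_iInter fun i ↦
      convex_halfSpace_ge ⟨fun _ _ ↦ rfl, fun _ _ ↦ rfl⟩ 0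
  case power =>
    exact convex_iInter fun s ↦ convex_halfSpace_le
      ⟨by simp [mul_add, sum_add_distrib], by simp [mul_sum, mul_left_comm]⟩ (Phat s)
  case mass =>
    exact convex_halfSpace_le ⟨by simp [sum_add_distrib], by simp [mul_sum]⟩ 1

variable {P Phat}

theorem exists_mem_feasibleControls_throughput_eq (r : (s : S) → ι s → ℝ)
    (hPhat : ∀ s, 0 ≤ Phat s) {lam : ℝ} (hlam : 0 ≤ lam)
    (hle : lam ≤ sSup (throughput r '' feasibleControls P Phat)) :
    ∃ x ∈ feasibleControls P Phat, throughput r x = lam :=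
  Icc_sSup_image_subset_image (isCompact_feasibleControls P Phat)
    (convex_feasibleControls P Phat).isPreconnected (zero_mem_feasibleControls hPhat)
    (continuous_throughput r).continuousOn ⟨(throughput_zero r).trans_le hlam, hle⟩

theorem exists_zero_power_weights_of_mass {s₀ : S} {i₀ : ι s₀} (hP₀ : P s₀ i₀ = 0) {m : ℝ}
    (hm : 0 ≤ m) :
    ∃ z : (s : S) → ι s → ℝ,
      (∀ s i, 0 ≤ z s i) ∧ (∀ s, ∑ i, P s i * z s i = 0) ∧ ∑ s, ∑ i, z s i = m := by
  classical
  let z : (s : S) → ι s → ℝ := Pi.single s₀ (Pi.single i₀ m)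
  have hz_other : ∀ s ≠ s₀, z s = 0 := fun s hs ↦ Pi.single_eq_of_ne hs _
  have hz_idle : z s₀ = Pi.single i₀ m := Pi.single_eq_same _ _
  have hz_nonneg : 0 ≤ z := Pi.single_nonneg.2 (Pi.single_nonneg.2 hm)
  refine ⟨z, hz_nonneg, fun s ↦ ?_, ?_⟩
  · rcases eq_or_ne s s₀ with rfl | hs
    · simp [hz_idle, Pi.single_apply, hP₀]
    · simp [hz_other s hs]
  · rw [Fintype.sum_eq_single s₀ fun s hs ↦ by simp [hz_other s hs], hz_idle]
    exact Fintype.sum_pi_single' i₀ m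

end Feasible

section Region

variable {S : Type*} [Fintype S] {I : S → ℕ} {P : (s : S) → Fin (I s + 1) → ℝ} {Phat : S → ℝ}

theorem lamHat_eq_sSup_throughput (rp : (s : S) → Fin (I s + 1) → ℝ) :
    lamHat I P rp Phat = sSup (throughput rp '' feasibleControls P Phat) := by
  unfold lamHat
  congr 1 with v
  simp only [feasibleControls, throughput, Set.mem_image, Set.mem_ofPred, and_assoc,
    eq_comm (a := v)]

theorem linRegion_throughput_nonempty (rs rp : (s : S) → Fin (I s + 1) → ℝ)
    {s₀ : S} {i₀ : Fin (I s₀ + 1)} (hP₀ : P s₀ i₀ = 0)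
    {x : (s : S) → Fin (I s + 1) → ℝ} (hx : x ∈ feasibleControls P Phat) :
    (linRegion I P rs rp Phat (throughput rp x)).Nonempty := by
  obtain ⟨hx_nonneg, hx_power, hx_mass⟩ := hx
  obtain ⟨z, hz_nonneg, hz_power, hz_mass⟩ :=
    exists_zero_power_weights_of_mass (P := P) hP₀ (sub_nonneg.2 hx_mass)
  refine ⟨fun s ↦ ∑ i, rs s i * z s i, x, z, hx_nonneg, hz_nonneg, rfl, fun s ↦ ?_, ?_,
    fun _ ↦ rfl⟩
  · simpa only [hz_power, zero_add] using hx_power s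
  · rw [hz_mass, sub_add_cancel]

end Region

theorem lin_region_nonempty_of_le_lamHat_general
    {S : Type*} [Fintype S] (I : S → ℕ)
    (P rs rp : (s : S) → Fin (I s + 1) → ℝ) (Phat : S → ℝ) (lam : ℝ)
    {s₀ : S} {i₀ : Fin (I s₀ + 1)} (hP₀ : P s₀ i₀ = 0)
    (hPhat : ∀ s, 0 ≤ Phat s) (hlam : 0 ≤ lam) (hle : lam ≤ lamHat I P rp Phat) :
    (linRegion I P rs rp Phat lam).Nonempty := by
  rw [lamHat_eq_sSup_throughput] at hle
  obtain ⟨x, hx, rfl⟩ := exists_mem_feasibleControls_throughput_eq rp hPhat hlam hle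
  exact linRegion_throughput_nonempty rs rp hP₀ hx

/-- **Converse direction of Corollary 1.** If `0 ≤ λ_p ≤ λ̂`, then the
linearized rate region `R̂_0` is nonempty. -/
theorem lin_region_nonempty_of_le_lamHat
    {S : Type*} [Fintype S] [Nonempty S]
    (I : S → ℕ) (hI : ∀ s, 1 ≤ I s)
    (P rs rp : (s : S) → Fin (I s + 1) → ℝ) (rp0 : ℝ)
    (Phat : S → ℝ) (lam : ℝ)
    (hP0 : ∀ s, P s 0 = 0) (hPnn : ∀ s i, 0 ≤ P s i)
    (hrs0 : ∀ s, rs s 0 = 0) (hrs : ∀ s i, rs s i ∈ Set.Icc (0:ℝ) 1)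
    (hrp : ∀ s i, rp s i ∈ Set.Icc (0:ℝ) 1) (hrp00 : ∀ s, rp s 0 = rp0)
    (hrp0 : rp0 ∈ Set.Icc (0:ℝ) 1)
    (hPhat : ∀ s, 0 ≤ Phat s) (hlam : 0 ≤ lam)
    (hle : lam ≤ lamHat I P rp Phat) :
    (linRegion I P rs rp Phat lam).Nonempty := by
  exact lin_region_nonempty_of_le_lamHat_general I P rs rp Phat lam
    (hP0 (Classical.arbitrary S)) hPhat hlam hle
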